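/- arXiv:1907.07436 — 2 statements merged into one kernel-verified Lean document; each statement's English description precedes it below -/
import Mathlib

section
/- Let Ω ⊆ ℝⁿ be an open set, F : Ω → ℝⁿ a continuous vector field and V : Ω → ℝ continuous. The following are equivalent: (i) V is a viscosity subsolution of −F(x)·∇V(x) ≤ 0 in Ω, i.e. for every C¹ function φ : Ω → ℝ and every point x₀ ∈ Ω at which V − φ attains a local maximum one has −F(x₀)·∇φ(x₀) ≤ 0; (ii) the pair (V,F) is forward weakly increasing, i.e. for every x₀ ∈ Ω there exist ε > 0 and a C¹ curve x : [0,ε) → Ω with x(0) = x₀, ẋ(t) = F(x(t)) for all t ∈ [0,ε), and V(x(s)) ≤ V(x(t)) whenever 0 ≤ s ≤ t < ε. -/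
open Set
open scoped RealInnerProductSpace

/-!
If `V` increases along a trajectory of `F` issuing from `x₀`, and `V - φ` has a local maximum at
`x₀`, then `φ` increases to first order along that trajectory, so `⟪F x₀, ∇φ x₀⟫ ≥ 0`.

Conversely, run the Euler scheme `X (k + 1) = X k + h • F (Y k)`, where the velocity is evaluated
not at `X k` but at a maximum point `Y k` of `z ↦ V z - ‖z - X k‖² / (2e)`, a nearby point since `e`
is small. Testing the subsolution property with `φ z = ‖z - X k‖² / (2e)` gives
`⟪F (Y k), Y k - X k⟫ ≥ 0`: the step moves `X k` towards `Y k` up to second order, so the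
maximal value (a sup-convolution of `V`) drops by at most `h² ‖F‖² / (2e)` per step. With `h = e²`
the total loss over a bounded time is `O(e)`, and the limit of the polygons along an ultrafilter
`e → 0⁺` solves `ẋ = F(x)`. The discrete inequality holds between any two nodes, so its limit gives
`V (x s) ≤ V (x t)` for all `s ≤ t`, not only `V x₀ ≤ V (x t)`.
-/

open Filter Metric Topology

section Euler

variable {E : Type*} [NormedAddCommGroup E] [NormedSpace ℝ E]

/-- `X` is the sequence of nodes of an Euler polygon with step `h` and velocities `G`. -/
def IsEulerSeq (h : ℝ) (X G : ℕ → E) : Prop :=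
  ∀ k, X (k + 1) = X k + h • G k

namespace IsEulerSeq

variable {h c : ℝ} {X G : ℕ → E}

lemma norm_sub_sub_smul_le (hX : IsEulerSeq h X G) (hh : 0 ≤ h) {w : E} {p q : ℕ} (hpq : p ≤ q)
    (hG : ∀ k, p ≤ k → k < q → ‖G k - w‖ ≤ c) :
    ‖X q - X p - (q * h - p * h) • w‖ ≤ c * (q * h - p * h) := by
  have hdist : ∀ {k}, p ≤ k → k < q →
      dist (X k - (k * h) • w) (X (k + 1) - ((k + 1 : ℕ) * h) • w) ≤ h * c := by
    intro k hpk hkq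
    have hsub : X (k + 1) - ((k + 1 : ℕ) * h) • w - (X k - (k * h) • w) = h • (G k - w) := by
      rw [hX k]
      push_cast
      module
    rw [dist_eq_norm', hsub, norm_smul, Real.norm_of_nonneg hh]
    gcongr
    exact hG k hpk hkq
  calc ‖X q - X p - (q * h - p * h) • w‖
      = dist (X p - (p * h) • w) (X q - (q * h) • w) := by
        rw [dist_eq_norm']
        congr 1
        module
    _ ≤ ∑ _k ∈ Finset.Ico p q, h * c := dist_le_Ico_sum_of_dist_le hpq hdist
    _ = c * (q * h - p * h) := by
        rw [Finset.sum_const, Nat.card_Ico, nsmul_eq_mul, Nat.cast_sub hpq]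
        ring

lemma norm_sub_le (hX : IsEulerSeq h X G) (hh : 0 ≤ h) (hG : ∀ k, ‖G k‖ ≤ c) (p q : ℕ) :
    ‖X q - X p‖ ≤ c * |q * h - p * h| := by
  wlog hpq : p ≤ q generalizing p q
  · rw [norm_sub_rev, abs_sub_comm]
    exact this q p (le_of_not_ge hpq)
  have hph : p * h ≤ q * h := by gcongr
  rw [abs_of_nonneg (sub_nonneg.2 hph)]
  simpa only [smul_zero, sub_zero] using
    hX.norm_sub_sub_smul_le hh (w := 0) hpq fun k _ _ => by simpa only [sub_zero] using hG k

lemma norm_sub_zero_le (hX : IsEulerSeq h X G) (hh : 0 ≤ h) (hG : ∀ k, ‖G k‖ ≤ c) (k : ℕ) :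
    ‖X k - X 0‖ ≤ c * (k * h) := by
  have := hX.norm_sub_le hh hG 0 k
  rwa [Nat.cast_zero, zero_mul, sub_zero, abs_of_nonneg (by positivity)] at this

end IsEulerSeq

lemma tendsto_nat_floor_div_mul {ι : Type*} {l : Filter ι} {h : ι → ℝ}
    (hh : Tendsto h l (𝓝[>] 0)) {t : ℝ} (ht : 0 ≤ t) :
    Tendsto (fun i => (⌊t / h i⌋₊ : ℝ) * h i) l (𝓝 t) := by
  simpa only [Function.comp_def, Pi.inv_apply, div_inv_eq_mul, ← div_eq_mul_inv] using
    (tendsto_nat_floor_mul_div_atTop ht).comp hh.inv_tendsto_nhdsGT_zero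

/-- `x` is, on `[0, T)`, the pointwise limit along `l` of Euler polygons whose steps `h i > 0` tend
to `0`. The polygon is sampled at its last node before time `t`. -/
structure IsEulerLimit {ι : Type*} (l : Filter ι) (h : ι → ℝ) (X G : ι → ℕ → E) (T : ℝ)
    (x : ℝ → E) : Prop where
  step : Tendsto h l (𝓝[>] 0)
  euler : ∀ i, IsEulerSeq (h i) (X i) (G i)
  tendsto : ∀ t ∈ Ico 0 T, Tendsto (fun i => X i ⌊t / h i⌋₊) l (𝓝 (x t))

lemma exists_isEulerLimit {ι : Type*} {U : Ultrafilter ι} {h : ι → ℝ} {X G : ι → ℕ → E} {T : ℝ}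
    {K : Set E} (hK : IsCompact K) (hh : Tendsto h U (𝓝[>] 0))
    (hX : ∀ i, IsEulerSeq (h i) (X i) (G i))
    (hXK : ∀ᶠ i in U, ∀ k : ℕ, k * h i < T → X i k ∈ K) :
    ∃ x : ℝ → E, (∀ t ∈ Ico 0 T, x t ∈ K) ∧ IsEulerLimit U h X G T x := by
  have hlim : ∀ t ∈ Ico 0 T, ∃ z ∈ K, Tendsto (fun i => X i ⌊t / h i⌋₊) U (𝓝 z) := by
    intro t ht
    refine hK.ultrafilter_le_nhds (U.map fun i => X i ⌊t / h i⌋₊) (tendsto_principal.2 ?_)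
    filter_upwards [hXK, (tendsto_nat_floor_div_mul hh ht.1).eventually_lt_const ht.2]
      with i hi hti using hi _ hti
  choose! x hxK hx using hlim
  exact ⟨x, hxK, hh, hX, hx⟩

namespace IsEulerLimit

variable {ι : Type*} {l : Filter ι} {h : ι → ℝ} {X G Y : ι → ℕ → E} {T : ℝ} {x : ℝ → E}

lemma eventually_step_pos (H : IsEulerLimit l h X G T x) : ∀ᶠ i in l, 0 < h i :=
  H.step self_mem_nhdsWithin

lemma tendsto_floor (H : IsEulerLimit l h X G T x) {t : ℝ} (ht : t ∈ Ico 0 T) :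
    Tendsto (fun i => (⌊t / h i⌋₊ : ℝ) * h i) l (𝓝 t) :=
  tendsto_nat_floor_div_mul H.step ht.1

lemma apply_zero [NeBot l] (H : IsEulerLimit l h X G T x) (hT : 0 < T) {x₀ : E}
    (h0 : ∀ i, X i 0 = x₀) : x 0 = x₀ := by
  have hlim := H.tendsto 0 ⟨le_rfl, hT⟩
  simp only [zero_div, Nat.floor_zero, h0] at hlim
  exact tendsto_nhds_unique hlim tendsto_const_nhds

lemma tendsto_of_norm_sub (H : IsEulerLimit l h X G T x)
    (hYX : ∀ η > 0, ∀ᶠ i in l, ∀ k : ℕ, k * h i < T → ‖Y i k - X i k‖ < η)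
    {t : ℝ} (ht : t ∈ Ico 0 T) : Tendsto (fun i => Y i ⌊t / h i⌋₊) l (𝓝 (x t)) := by
  have hdiff : Tendsto (fun i => Y i ⌊t / h i⌋₊ - X i ⌊t / h i⌋₊) l (𝓝 0) := by
    refine NormedAddGroup.tendsto_nhds_zero.2 fun η hη => ?_
    filter_upwards [hYX η hη, (H.tendsto_floor ht).eventually_lt_const ht.2]
      with i hi hti using hi _ hti
  simpa only [sub_add_cancel, zero_add] using hdiff.add (H.tendsto t ht)

lemma norm_sub_sub_smul_le [NeBot l] (H : IsEulerLimit l h X G T x) {s δ c : ℝ} {w : E}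
    (hG : ∀ᶠ i in l, ∀ k : ℕ, k * h i < T → |k * h i - s| < δ → ‖G i k - w‖ ≤ c)
    {a b : ℝ} (ha : a ∈ Ico 0 T) (hb : b ∈ Ico 0 T) (has : |a - s| < δ) (hbs : |b - s| < δ)
    (hab : a ≤ b) : ‖x b - x a - (b - a) • w‖ ≤ c * (b - a) := by
  have htime := (H.tendsto_floor hb).sub (H.tendsto_floor ha)
  have hincr := (((H.tendsto b hb).sub (H.tendsto a ha)).sub (htime.smul_const w)).norm
  refine le_of_tendsto_of_tendsto hincr (htime.const_mul c) ?_
  filter_upwards [hG, H.eventually_step_pos, (H.tendsto_floor hb).eventually_lt_const hb.2,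
    (H.tendsto_floor ha).sub_const s |>.abs.eventually_lt_const has,
    (H.tendsto_floor hb).sub_const s |>.abs.eventually_lt_const hbs] with i hGi hpos hbT hai hbi
  refine (H.euler i).norm_sub_sub_smul_le hpos.le (by gcongr) fun k hak hkb => ?_
  have hak' : (⌊a / h i⌋₊ : ℝ) * h i ≤ k * h i := by gcongr
  have hkb' : k * h i ≤ (⌊b / h i⌋₊ : ℝ) * h i := by gcongr
  rw [abs_lt] at hai hbi
  exact hGi k (by linarith) (abs_lt.2 ⟨by linarith, by linarith⟩)

lemma hasDerivWithinAt_of_velocity [NeBot l] (H : IsEulerLimit l h X G T x) {s : ℝ}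
    (hs : s ∈ Ico 0 T) {w : E}
    (hG : ∀ c > 0, ∃ δ > 0, ∀ᶠ i in l, ∀ k : ℕ,
      k * h i < T → |k * h i - s| < δ → ‖G i k - w‖ ≤ c) :
    HasDerivWithinAt x w (Ico 0 T) s := by
  rw [hasDerivWithinAt_iff_isLittleO, Asymptotics.isLittleO_iff]
  intro c hc
  obtain ⟨δ, hδ, hGδ⟩ := hG c hc
  filter_upwards [self_mem_nhdsWithin, mem_nhdsWithin_of_mem_nhds (ball_mem_nhds s hδ)]
    with t ht htδ
  have hsδ : |s - s| < δ := by rwa [sub_self, abs_zero]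
  rcases le_total s t with hst | hts
  · rw [Real.norm_of_nonneg (sub_nonneg.2 hst)]
    exact H.norm_sub_sub_smul_le hGδ hs ht hsδ htδ hst
  · rw [Real.norm_of_nonpos (sub_nonpos.2 hts), neg_sub, ← norm_neg]
    have hneg : -(x t - x s - (t - s) • w) = x s - x t - (s - t) • w := by module
    rw [hneg]
    exact H.norm_sub_sub_smul_le hGδ ht hs htδ hsδ hts

lemma eventually_norm_sub_lt (H : IsEulerLimit l h X G T x) {M : ℝ} (hG : ∀ i k, ‖G i k‖ ≤ M)
    (hYX : ∀ η > 0, ∀ᶠ i in l, ∀ k : ℕ, k * h i < T → ‖Y i k - X i k‖ < η)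
    {s : ℝ} (hs : s ∈ Ico 0 T) {ρ : ℝ} (hρ : 0 < ρ) :
    ∃ δ > 0, ∀ᶠ i in l, ∀ k : ℕ, k * h i < T → |k * h i - s| < δ → ‖Y i k - x s‖ < ρ := by
  obtain ⟨δ, hδ, hMδ⟩ : ∃ δ > 0, M * (2 * δ) < ρ / 3 := by
    simpa only [mul_assoc] using exists_pos_mul_lt (by positivity : 0 < ρ / 3) (M * 2)
  have hnode : Tendsto (fun i => ‖X i ⌊s / h i⌋₊ - x s‖) l (𝓝 0) :=
    tendsto_iff_norm_sub_tendsto_zero.1 (H.tendsto s hs)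
  have htime : Tendsto (fun i => |s - ⌊s / h i⌋₊ * h i|) l (𝓝 0) := by
    simpa only [sub_self, abs_zero] using ((H.tendsto_floor hs).const_sub s).abs
  refine ⟨δ, hδ, ?_⟩
  filter_upwards [hYX (ρ / 3) (by positivity), H.eventually_step_pos,
    hnode.eventually_lt_const (by positivity : 0 < ρ / 3), htime.eventually_lt_const hδ]
    with i hYi hpos hni hti k hkT hks
  have hkn : |k * h i - ⌊s / h i⌋₊ * h i| ≤ 2 * δ := by
    linarith [abs_sub_le (k * h i) s (⌊s / h i⌋₊ * h i)]
  have hnodes : ‖X i k - X i ⌊s / h i⌋₊‖ ≤ M * (2 * δ) :=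
    ((H.euler i).norm_sub_le hpos.le (hG i) _ _).trans
      (mul_le_mul_of_nonneg_left hkn ((norm_nonneg _).trans (hG i 0)))
  calc ‖Y i k - x s‖
      = ‖(Y i k - X i k) + (X i k - X i ⌊s / h i⌋₊) + (X i ⌊s / h i⌋₊ - x s)‖ := by
        congr 1
        abel
    _ ≤ ‖Y i k - X i k‖ + ‖X i k - X i ⌊s / h i⌋₊‖ + ‖X i ⌊s / h i⌋₊ - x s‖ := norm_add₃_le
    _ < ρ := by
        linarith [hYi k hkT]

lemma hasDerivWithinAt [NeBot l] {F : E → E} {K : Set E} {M : ℝ}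
    (H : IsEulerLimit l h X (fun i k => F (Y i k)) T x) (hYK : ∀ i k, Y i k ∈ K)
    (hM : ∀ y ∈ K, ‖F y‖ ≤ M)
    (hYX : ∀ η > 0, ∀ᶠ i in l, ∀ k : ℕ, k * h i < T → ‖Y i k - X i k‖ < η)
    {s : ℝ} (hs : s ∈ Ico 0 T) (hF : ContinuousWithinAt F K (x s)) :
    HasDerivWithinAt x (F (x s)) (Ico 0 T) s := by
  refine H.hasDerivWithinAt_of_velocity hs fun c hc => ?_
  obtain ⟨ρ, hρ, hFρ⟩ := Metric.continuousWithinAt_iff.1 hF c hc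
  obtain ⟨δ, hδ, hYδ⟩ := H.eventually_norm_sub_lt (fun i k => hM _ (hYK i k)) hYX hs hρ
  refine ⟨δ, hδ, hYδ.mono fun i hi k hkT hks => ?_⟩
  rw [← dist_eq_norm]
  exact (hFρ (hYK i k) (by rw [dist_eq_norm]; exact hi k hkT hks)).le

lemma map_le_map [NeBot l] (H : IsEulerLimit l h X G T x) {V : E → ℝ} {r : ι → ℝ}
    (hYX : ∀ η > 0, ∀ᶠ i in l, ∀ k : ℕ, k * h i < T → ‖Y i k - X i k‖ < η)
    (hr : Tendsto r l (𝓝 0))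
    (hVr : ∀ᶠ i in l, ∀ p q : ℕ, p ≤ q → q * h i < T → V (X i p) ≤ V (Y i q) + r i)
    {s t : ℝ} (hs : 0 ≤ s) (hst : s ≤ t) (ht : t < T)
    (hVs : ContinuousAt V (x s)) (hVt : ContinuousAt V (x t)) : V (x s) ≤ V (x t) := by
  have htT : t ∈ Ico 0 T := ⟨hs.trans hst, ht⟩
  have hleft := hVs.tendsto.comp (H.tendsto s ⟨hs, hst.trans_lt ht⟩)
  have hright := (hVt.tendsto.comp (H.tendsto_of_norm_sub hYX htT)).add hr
  rw [add_zero] at hright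
  refine le_of_tendsto_of_tendsto hleft hright ?_
  filter_upwards [hVr, H.eventually_step_pos, (H.tendsto_floor htT).eventually_lt_const ht]
    with i hi hpos hti
  exact hi _ _ (by gcongr) hti

end IsEulerLimit

end Euler

section ProxPoint

variable {E : Type*} [NormedAddCommGroup E]

/-- The function `z ↦ V z - ‖z - x‖² / (2e)`, whose supremum is the sup-convolution of `V` at `x`
with parameter `e`. -/
noncomputable def quadPenalized (V : E → ℝ) (e : ℝ) (x z : E) : ℝ :=
  V z - ‖z - x‖ ^ 2 / (2 * e)

/-- `y` is a proximal point of `x` for `V` on `K`: it maximises the penalised function on `K`. -/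
structure IsProxPoint (V : E → ℝ) (e : ℝ) (K : Set E) (x y : E) : Prop where
  mem : y ∈ K
  isMaxOn : IsMaxOn (quadPenalized V e x) K y

lemma quadPenalized_self (V : E → ℝ) (e : ℝ) (x : E) : quadPenalized V e x x = V x := by
  simp [quadPenalized]

lemma quadPenalized_le (V : E → ℝ) {e : ℝ} (he : 0 ≤ e) (x z : E) :
    quadPenalized V e x z ≤ V z :=
  sub_le_self _ (by positivity)

lemma exists_isProxPoint {K : Set E} (hK : IsCompact K) (hne : K.Nonempty) {V : E → ℝ}
    (hV : ContinuousOn V K) (e : ℝ) (x : E) : ∃ y, IsProxPoint V e K x y :=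
  have ⟨y, hy, hmax⟩ := hK.exists_isMaxOn hne (f := quadPenalized V e x) (hV.sub (by fun_prop))
  ⟨y, hy, hmax⟩

namespace IsProxPoint

variable {V : E → ℝ} {K : Set E} {e : ℝ} {x y : E}

lemma le_quadPenalized (hy : IsProxPoint V e K x y) (hx : x ∈ K) : V x ≤ quadPenalized V e x y :=
  (quadPenalized_self V e x).ge.trans (hy.isMaxOn hx)

lemma sq_norm_sub_le (hy : IsProxPoint V e K x y) (he : 0 < e) (hx : x ∈ K) {C : ℝ}
    (hC : ∀ z ∈ K, ‖V z‖ ≤ C) : ‖y - x‖ ^ 2 ≤ 4 * e * C := by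
  have hle : V x ≤ V y - ‖y - x‖ ^ 2 / (2 * e) := hy.le_quadPenalized hx
  have hdiv : ‖y - x‖ ^ 2 / (2 * e) ≤ 2 * C := by
    linarith [neg_le_of_abs_le (hC x hx), le_of_abs_le (hC y hy.mem)]
  rw [div_le_iff₀ (by positivity)] at hdiv
  linarith

lemma quadPenalized_le_add [InnerProductSpace ℝ E] (he : 0 < e) {h : ℝ} (hh : 0 ≤ h) {v y' : E}
    (hy : y ∈ K) (hv : 0 ≤ ⟪v, y - x⟫) (hy' : IsProxPoint V e K (x + h • v) y') :
    quadPenalized V e x y ≤ quadPenalized V e (x + h • v) y' + h ^ 2 * ‖v‖ ^ 2 / (2 * e) := by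
  have hstep : ‖y - (x + h • v)‖ ^ 2 ≤ ‖y - x‖ ^ 2 + h ^ 2 * ‖v‖ ^ 2 := by
    rw [← sub_sub, norm_sub_sq_real, inner_smul_right, real_inner_comm, norm_smul,
      Real.norm_of_nonneg hh, mul_pow]
    linarith [mul_nonneg hh hv]
  calc quadPenalized V e x y
      ≤ quadPenalized V e (x + h • v) y + h ^ 2 * ‖v‖ ^ 2 / (2 * e) := by
        unfold quadPenalized
        have hdiv := div_le_div_of_nonneg_right hstep (by positivity : 0 ≤ 2 * e)
        rw [add_div] at hdiv
        linarith
    _ ≤ quadPenalized V e (x + h • v) y' + h ^ 2 * ‖v‖ ^ 2 / (2 * e) := by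
        gcongr
        exact hy'.isMaxOn hy

end IsProxPoint

lemma eventually_norm_sub_lt_of_isProxPoint {V : E → ℝ} {K : Set E} {C η : ℝ}
    (hC : ∀ z ∈ K, ‖V z‖ ≤ C) (hη : 0 < η) :
    ∀ᶠ e in 𝓝[>] 0, ∀ x y, x ∈ K → IsProxPoint V e K x y → ‖y - x‖ < η := by
  have hbound : Tendsto (fun e : ℝ => 4 * e * C) (𝓝[>] 0) (𝓝 0) :=
    tendsto_nhdsWithin_of_tendsto_nhds (Continuous.tendsto' (by fun_prop) 0 0 (by simp))
  filter_upwards [hbound.eventually_lt_const (by positivity : 0 < η ^ 2), self_mem_nhdsWithin]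
    with e heη he x y hx hy
  exact lt_of_pow_lt_pow_left₀ 2 hη.le ((hy.sq_norm_sub_le he hx hC).trans_lt heη)

end ProxPoint

section Viscosity

variable {E : Type*} [NormedAddCommGroup E] [InnerProductSpace ℝ E]
  {F : E → E} {V : E → ℝ} {Ω : Set E}

/-- `V` is a viscosity subsolution of `-⟪F, ∇V⟫ ≤ 0` in `Ω`, tested with globally defined `C¹`
functions. -/
def IsViscositySubsolutionOn [CompleteSpace E] (F : E → E) (V : E → ℝ) (Ω : Set E) : Prop :=
  ∀ φ : E → ℝ, ContDiff ℝ 1 φ → ∀ x₀ ∈ Ω,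
    IsLocalMaxOn (fun x => V x - φ x) Ω x₀ → -⟪F x₀, gradient φ x₀⟫ ≤ 0

/-- The pair `(V, F)` is forward weakly increasing in `Ω`: from each point of `Ω` starts a
trajectory of `F` in `Ω` along which `V` is nondecreasing. -/
def IsForwardWeaklyIncreasingOn (F : E → E) (V : E → ℝ) (Ω : Set E) : Prop :=
  ∀ x₀ ∈ Ω, ∃ ε > (0 : ℝ), ∃ x : ℝ → E,
    x 0 = x₀ ∧ (∀ t ∈ Ico (0 : ℝ) ε, x t ∈ Ω) ∧
    (∀ t ∈ Ico (0 : ℝ) ε, HasDerivWithinAt x (F (x t)) (Ico (0 : ℝ) ε) t) ∧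
    ∀ s t : ℝ, 0 ≤ s → s ≤ t → t < ε → V (x s) ≤ V (x t)

lemma hasGradientAt_norm_sub_sq_div [CompleteSpace E] (e : ℝ) (x y : E) :
    HasGradientAt (fun z => ‖z - x‖ ^ 2 / (2 * e)) (e⁻¹ • (y - x)) y := by
  rw [hasGradientAt_iff_hasFDerivAt]
  simp only [div_eq_inv_mul]
  refine (((hasFDerivAt_id y).sub_const x).norm_sq.const_mul (2 * e)⁻¹).congr_fderiv ?_
  ext v
  simp only [mul_inv_rev, id_eq, map_sub, ContinuousLinearMap.comp_id, smul_apply, sub_apply,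
    coe_innerSL_apply, nsmul_eq_mul, Nat.cast_ofNat, smul_eq_mul, map_smul,
    InnerProductSpace.toDual_apply_apply]
  ring

lemma nonneg_of_isLocalMinOn_Ico_left {f : ℝ → ℝ} {f' a b : ℝ} (hab : a < b)
    (hmin : IsLocalMinOn f (Ico a b) a) (hf : HasDerivWithinAt f f' (Ico a b) a) : 0 ≤ f' := by
  have hcone : 1 ∈ posTangentConeAt (Ico a b) a := by
    refine mem_posTangentConeAt_of_frequently_mem (Eventually.frequently ?_)
    filter_upwards [Ioo_mem_nhdsGT (sub_pos.2 hab)] with t ht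
    rw [smul_eq_mul, mul_one]
    exact ⟨by linarith [ht.1], by linarith [ht.2]⟩
  simpa using hmin.hasFDerivWithinAt_nonneg hf.hasFDerivWithinAt hcone

theorem IsForwardWeaklyIncreasingOn.isViscositySubsolutionOn [CompleteSpace E]
    (H : IsForwardWeaklyIncreasingOn F V Ω) : IsViscositySubsolutionOn F V Ω := by
  intro φ hφ x₀ hx₀ hmax
  obtain ⟨ε, hε, x, rfl, hxΩ, hderiv, hmono⟩ := H x₀ hx₀
  have h0 : (0 : ℝ) ∈ Ico 0 ε := ⟨le_rfl, hε⟩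
  have hφx : HasDerivWithinAt (φ ∘ x) ⟪F (x 0), gradient φ (x 0)⟫ (Ico 0 ε) 0 := by
    rw [inner_gradient_right]
    exact (hφ.differentiable one_ne_zero (x 0)).hasFDerivAt.comp_hasDerivWithinAt 0 (hderiv 0 h0)
  have hmin : IsLocalMinOn (φ ∘ x) (Ico 0 ε) 0 := by
    have hx : Tendsto x (𝓝[Ico 0 ε] 0) (𝓝[Ω] x 0) :=
      (hderiv 0 h0).continuousWithinAt.tendsto_nhdsWithin hxΩ
    filter_upwards [hx.eventually hmax, self_mem_nhdsWithin] with t hmaxt ht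
    simp only [Function.comp_apply]
    linarith [hmono 0 t le_rfl ht.1 ht.2]
  exact neg_nonpos.2 (nonneg_of_isLocalMinOn_Ico_left hε hmin hφx)

lemma IsViscositySubsolutionOn.inner_nonneg_of_isProxPoint [CompleteSpace E]
    (H : IsViscositySubsolutionOn F V Ω) {e : ℝ} (he : 0 < e) {K : Set E} {x y : E} (hyΩ : y ∈ Ω)
    (hK : K ∈ 𝓝 y) (hy : IsProxPoint V e K x y) : 0 ≤ ⟪F y, y - x⟫ := by
  have hφ : ContDiff ℝ 1 fun z => ‖z - x‖ ^ 2 / (2 * e) :=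
    ((contDiff_id.sub contDiff_const).norm_sq ℝ).div_const _
  have hgrad := H _ hφ y hyΩ ((hy.isMaxOn.isLocalMax hK).on Ω)
  rw [(hasGradientAt_norm_sub_sq_div e x y).gradient, inner_smul_right, neg_nonpos] at hgrad
  exact nonneg_of_mul_nonneg_right hgrad (inv_pos.2 he)

/-- A sequence of Euler nodes `X` for `F` with velocities evaluated at proximal points `Y k` of the
nodes. -/
structure IsProxEulerSeq (F : E → E) (V : E → ℝ) (K : Set E) (h e : ℝ) (X Y : ℕ → E) : Prop where
  euler : IsEulerSeq h X (fun k => F (Y k))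
  prox : ∀ k, IsProxPoint V e K (X k) (Y k)

lemma exists_isProxEulerSeq {K : Set E} (hK : IsCompact K) (hV : ContinuousOn V K) {x₀ : E}
    (hx₀ : x₀ ∈ K) (F : E → E) (h e : ℝ) :
    ∃ X Y : ℕ → E, X 0 = x₀ ∧ IsProxEulerSeq F V K h e X Y := by
  choose P hP using exists_isProxPoint hK ⟨x₀, hx₀⟩ hV e
  let X : ℕ → E := fun k => Nat.rec x₀ (fun _ x => x + h • F (P x)) k
  exact ⟨X, fun k => P (X k), rfl, fun _ => rfl, fun k => hP (X k)⟩

namespace IsProxEulerSeq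

variable {K : Set E} {h e M : ℝ} {X Y : ℕ → E}

lemma quadPenalized_le_add (H : IsProxEulerSeq F V K h e X Y) (hh : 0 ≤ h) (he : 0 < e)
    (hM : ∀ z ∈ K, ‖F z‖ ≤ M) {p q : ℕ} (hpq : p ≤ q)
    (hF : ∀ k, p ≤ k → k < q → 0 ≤ ⟪F (Y k), Y k - X k⟫) :
    quadPenalized V e (X p) (Y p)
      ≤ quadPenalized V e (X q) (Y q) + (q - p) * (h ^ 2 * M ^ 2 / (2 * e)) := by
  induction q, hpq using Nat.le_induction with
  | base => simp
  | succ q hpq ih =>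
    have hq := ih fun k hpk hkq => hF k hpk (hkq.trans q.lt_succ_self)
    have hprox := H.prox (q + 1)
    rw [H.euler q] at hprox
    have hstep := hprox.quadPenalized_le_add he hh (H.prox q).mem (hF q hpq q.lt_succ_self)
    rw [← H.euler q] at hstep
    have hloss : h ^ 2 * ‖F (Y q)‖ ^ 2 / (2 * e) ≤ h ^ 2 * M ^ 2 / (2 * e) := by
      gcongr
      exact hM _ (H.prox q).mem
    push_cast
    linarith

lemma map_le_map_add (H : IsProxEulerSeq F V K h e X Y) (hh : 0 ≤ h) (he : 0 < e)
    (hM : ∀ z ∈ K, ‖F z‖ ≤ M) {p q : ℕ} (hpq : p ≤ q) (hp : X p ∈ K)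
    (hF : ∀ k, p ≤ k → k < q → 0 ≤ ⟪F (Y k), Y k - X k⟫) {T : ℝ} (hqT : q * h ≤ T) :
    V (X p) ≤ V (Y q) + T * (h * M ^ 2 / (2 * e)) := by
  have hloss : (q - p) * (h ^ 2 * M ^ 2 / (2 * e)) ≤ T * (h * M ^ 2 / (2 * e)) :=
    calc (q - p) * (h ^ 2 * M ^ 2 / (2 * e)) = ((q - p) * h) * (h * M ^ 2 / (2 * e)) := by ring
      _ ≤ (q * h) * (h * M ^ 2 / (2 * e)) := by
          gcongr
          exact sub_le_self _ p.cast_nonneg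
      _ ≤ T * (h * M ^ 2 / (2 * e)) := by gcongr
  linarith [(H.prox p).le_quadPenalized hp, H.quadPenalized_le_add hh he hM hpq hF,
    quadPenalized_le V he.le (X q) (Y q)]

lemma mem_closedBall (H : IsProxEulerSeq F V K h e X Y) (hh : 0 ≤ h) (hM : ∀ z ∈ K, ‖F z‖ ≤ M)
    {T r : ℝ} (hr : M * T ≤ r) {k : ℕ} (hk : k * h ≤ T) : X k ∈ closedBall (X 0) r := by
  have hFY : ∀ j, ‖F (Y j)‖ ≤ M := fun j => hM _ (H.prox j).mem
  have hM0 : 0 ≤ M := (norm_nonneg _).trans (hFY 0)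
  rw [mem_closedBall_iff_norm]
  exact (H.euler.norm_sub_zero_le hh hFY k).trans
    ((mul_le_mul_of_nonneg_left hk hM0).trans hr)

end IsProxEulerSeq

namespace IsViscositySubsolutionOn

variable [CompleteSpace E] {x₀ : E} {R M T : ℝ} {X Y : ℝ → ℕ → E}

lemma eventually_inner_nonneg (H : IsViscositySubsolutionOn F V Ω) (hR : 0 < R)
    (hKΩ : closedBall x₀ R ⊆ Ω)
    (hXY : ∀ e, IsProxEulerSeq F V (closedBall x₀ R) (e ^ 2) e (X e) (Y e))
    (hX : ∀ e, ∀ k : ℕ, k * e ^ 2 < T → X e k ∈ closedBall x₀ (R / 2))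
    (hYX : ∀ η > 0, ∀ᶠ e in 𝓝[>] 0, ∀ k : ℕ, k * e ^ 2 < T → ‖Y e k - X e k‖ < η) :
    ∀ᶠ e in 𝓝[>] 0, ∀ k : ℕ, k * e ^ 2 < T → 0 ≤ ⟪F (Y e k), Y e k - X e k⟫ := by
  filter_upwards [hYX (R / 2) (half_pos hR), self_mem_nhdsWithin] with e hclose he k hk
  have hprox := (hXY e).prox k
  have hball : Y e k ∈ ball x₀ R := by
    have htri := dist_triangle (Y e k) (X e k) x₀
    rw [dist_eq_norm (Y e k) (X e k)] at htri
    rw [mem_ball]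
    linarith [hclose k hk, mem_closedBall.1 (hX e k hk)]
  exact H.inner_nonneg_of_isProxPoint he (hKΩ hprox.mem) (closedBall_mem_nhds_of_mem hball) hprox

lemma eventually_map_le_map_add (H : IsViscositySubsolutionOn F V Ω) (hR : 0 < R)
    (hKΩ : closedBall x₀ R ⊆ Ω) (hM : ∀ z ∈ closedBall x₀ R, ‖F z‖ ≤ M)
    (hXY : ∀ e, IsProxEulerSeq F V (closedBall x₀ R) (e ^ 2) e (X e) (Y e))
    (hX : ∀ e, ∀ k : ℕ, k * e ^ 2 < T → X e k ∈ closedBall x₀ (R / 2))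
    (hYX : ∀ η > 0, ∀ᶠ e in 𝓝[>] 0, ∀ k : ℕ, k * e ^ 2 < T → ‖Y e k - X e k‖ < η) :
    ∀ᶠ e in 𝓝[>] 0, ∀ p q : ℕ, p ≤ q → q * e ^ 2 < T →
      V (X e p) ≤ V (Y e q) + T * (e * M ^ 2 / 2) := by
  filter_upwards [H.eventually_inner_nonneg hR hKΩ hXY hX hYX, self_mem_nhdsWithin]
    with e hinner he p q hpq hqT
  have he : 0 < e := he
  have hlt : ∀ k ≤ q, k * e ^ 2 < T := fun k hk => lt_of_le_of_lt (by gcongr) hqT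
  have hloss : e ^ 2 * M ^ 2 / (2 * e) = e * M ^ 2 / 2 := by field_simp
  rw [← hloss]
  exact (hXY e).map_le_map_add (sq_nonneg e) he hM hpq
    (closedBall_subset_closedBall (half_le_self hR.le) (hX e p (hlt p hpq)))
    (fun k _ hk => hinner k (hlt k hk.le)) hqT.le

end IsViscositySubsolutionOn

lemma exists_isProxEulerSeq_family [ProperSpace E] {x₀ : E} {R M T : ℝ} (hR : 0 < R)
    (hV : ContinuousOn V (closedBall x₀ R)) (hM : ∀ z ∈ closedBall x₀ R, ‖F z‖ ≤ M)
    (hMT : M * T ≤ R / 2) :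
    ∃ X Y : ℝ → ℕ → E, (∀ e, X e 0 = x₀) ∧
      (∀ e, IsProxEulerSeq F V (closedBall x₀ R) (e ^ 2) e (X e) (Y e)) ∧
      (∀ e, ∀ k : ℕ, k * e ^ 2 < T → X e k ∈ closedBall x₀ (R / 2)) ∧
      ∀ η > 0, ∀ᶠ e in 𝓝[>] 0, ∀ k : ℕ, k * e ^ 2 < T → ‖Y e k - X e k‖ < η := by
  have hK := isCompact_closedBall x₀ R
  obtain ⟨C, hC⟩ := hK.exists_bound_of_continuousOn hV
  choose X Y hX0 hXY using fun e : ℝ =>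
    exists_isProxEulerSeq hK hV (mem_closedBall_self hR.le) F (e ^ 2) e
  have hX : ∀ e, ∀ k : ℕ, k * e ^ 2 < T → X e k ∈ closedBall x₀ (R / 2) := fun e k hk =>
    hX0 e ▸ (hXY e).mem_closedBall (sq_nonneg e) hM hMT hk.le
  have hhalf : closedBall x₀ (R / 2) ⊆ closedBall x₀ R :=
    closedBall_subset_closedBall (half_le_self hR.le)
  refine ⟨X, Y, hX0, hXY, hX, fun η hη => ?_⟩
  filter_upwards [eventually_norm_sub_lt_of_isProxPoint hC hη] with e he k hk
  exact he _ _ (hhalf (hX e k hk)) ((hXY e).prox k)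

theorem IsViscositySubsolutionOn.isForwardWeaklyIncreasingOn [ProperSpace E]
    (H : IsViscositySubsolutionOn F V Ω) (hΩ : IsOpen Ω) (hF : ContinuousOn F Ω)
    (hV : ContinuousOn V Ω) : IsForwardWeaklyIncreasingOn F V Ω := by
  intro x₀ hx₀
  obtain ⟨R, hR, hKΩ⟩ := nhds_basis_closedBall.mem_iff.1 (hΩ.mem_nhds hx₀)
  obtain ⟨M, hM⟩ := (isCompact_closedBall x₀ R).exists_bound_of_continuousOn (hF.mono hKΩ)
  obtain ⟨T, hT, hMT⟩ := exists_pos_mul_lt (half_pos hR) M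
  obtain ⟨X, Y, hX0, hXY, hX, hYX⟩ := exists_isProxEulerSeq_family hR (hV.mono hKΩ) hM hMT.le
  have hVXY := H.eventually_map_le_map_add hR hKΩ hM hXY hX hYX
  have hstep : Tendsto (fun e : ℝ => e ^ 2) (𝓝[>] 0) (𝓝[>] 0) :=
    tendsto_nhdsWithin_iff.2
      ⟨tendsto_nhdsWithin_of_tendsto_nhds (Continuous.tendsto' (by fun_prop) 0 0 (by simp)),
        eventually_mem_nhdsWithin.mono fun e (he : 0 < e) => pow_pos he 2⟩
  have hloss : Tendsto (fun e : ℝ => T * (e * M ^ 2 / 2)) (𝓝[>] 0) (𝓝 0) :=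
    tendsto_nhdsWithin_of_tendsto_nhds (Continuous.tendsto' (by fun_prop) 0 0 (by simp))
  have hU : (Ultrafilter.of (𝓝[>] (0 : ℝ)) : Filter ℝ) ≤ 𝓝[>] 0 := Ultrafilter.of_le _
  obtain ⟨x, hxR, hx⟩ := exists_isEulerLimit (isCompact_closedBall x₀ (R / 2))
    (hstep.mono_left hU) (fun e => (hXY e).euler) (Eventually.of_forall hX)
  have hxK : ∀ t ∈ Ico 0 T, x t ∈ closedBall x₀ R := fun t ht =>
    closedBall_subset_closedBall (half_le_self hR.le) (hxR t ht)
  have hVx : ∀ t ∈ Ico 0 T, ContinuousAt V (x t) := fun t ht =>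
    hV.continuousAt (hΩ.mem_nhds (hKΩ (hxK t ht)))
  have hYXU := fun η hη => hU (hYX η hη)
  refine ⟨T, hT, x, hx.apply_zero hT hX0, fun t ht => hKΩ (hxK t ht), fun t ht => ?_,
    fun s t hs hst htT => ?_⟩
  · exact hx.hasDerivWithinAt (fun e k => ((hXY e).prox k).mem) hM hYXU ht
      ((hF.mono hKΩ).continuousWithinAt (hxK t ht))
  · exact hx.map_le_map hYXU (hloss.mono_left hU) (hU hVXY) hs hst htT
      (hVx s ⟨hs, hst.trans_lt htT⟩) (hVx t ⟨hs.trans hst, htT⟩)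

end Viscosity

theorem stmt_0_general {E : Type*} [NormedAddCommGroup E] [InnerProductSpace ℝ E] [ProperSpace E]
    {F : E → E} {V : E → ℝ} {Ω : Set E} (hΩ : IsOpen Ω) (hF : ContinuousOn F Ω)
    (hV : ContinuousOn V Ω) :
    IsViscositySubsolutionOn F V Ω ↔ IsForwardWeaklyIncreasingOn F V Ω :=
  ⟨fun H => H.isForwardWeaklyIncreasingOn hΩ hF hV, fun H => H.isViscositySubsolutionOn⟩

/-- equivalence between being a viscosity subsolution of
`-F(x)·∇V(x) ≤ 0` and forward weak monotonicity of `V` along the flow of `F`. -/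
theorem stmt_0 {n : ℕ} (Ω : Set (EuclideanSpace ℝ (Fin n))) (hΩ : IsOpen Ω)
    (F : EuclideanSpace ℝ (Fin n) → EuclideanSpace ℝ (Fin n)) (hF : ContinuousOn F Ω)
    (V : EuclideanSpace ℝ (Fin n) → ℝ) (hV : ContinuousOn V Ω) :
    (∀ φ : EuclideanSpace ℝ (Fin n) → ℝ, ContDiff ℝ 1 φ → ∀ x₀ ∈ Ω,
        IsLocalMaxOn (fun x => V x - φ x) Ω x₀ → -⟪F x₀, gradient φ x₀⟫ ≤ 0)
    ↔
    (∀ x₀ ∈ Ω, ∃ ε > (0:ℝ), ∃ x : ℝ → EuclideanSpace ℝ (Fin n),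
        x 0 = x₀ ∧ (∀ t ∈ Ico (0:ℝ) ε, x t ∈ Ω) ∧
        (∀ t ∈ Ico (0:ℝ) ε, HasDerivWithinAt x (F (x t)) (Ico (0:ℝ) ε) t) ∧
        ∀ s t : ℝ, 0 ≤ s → s ≤ t → t < ε → V (x s) ≤ V (x t)) :=
  stmt_0_general hΩ hF hV
end

section
/- Let Ω ⊆ ℝⁿ be open and let H : Ω × ℝⁿ → ℝ be continuous with H(x,−p) = H(x,p), such that the gradient H_p(x,p) in the second variable exists and is continuous at every (x,p) with H(x,p) > 0. Let U ∈ C¹(Ω) be a C¹-supersolution of the Aronsson equation. Then for every x₀ ∈ Ω with H(x₀,∇U(x₀)) > 0 there exist ε > 0 and a C¹ curve x : [0,ε) → Ω with x(0) = x₀, ẋ(t) = −H_p(x(t),∇U(x(t))) for all t, such that t ↦ H(x(t),∇U(x(t))) is nondecreasing on [0,ε). -/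
open Set
open scoped RealInnerProductSpace

/-!
Replace `V` by its sup-convolution `V_c y = max_z (V z - c ‖z - y‖²)`, and let `s` be a maximizer
for `y`. Testing the viscosity inequality with the paraboloid `c ‖· - y‖²` gives
`⟪F s, s - y⟫ ≥ 0`, so the Euler step `y ↦ y + h F s` decreases `V_c` by at most `c h² ‖F s‖²`.
Iterating over a time interval of length `T` costs `O(T c h)` in total, while
`‖s - y‖ = O(c^(-1/2))`. Letting `c → ∞` and `c h → 0`, the Euler polygons subconverge, by
Arzelà–Ascoli, to a trajectory of `ẋ = F x`. Since the estimate `V (y i) ≤ V (s j) + o(1)` holds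
between any two nodes `i ≤ j`, `V` is nondecreasing along the limit.
-/

open Filter Topology Metric MeasureTheory
open scoped NNReal Interval

section LipschitzCompactness

theorem isCompact_setOf_lipschitzWith_apply_eq {X Y : Type*} [PseudoMetricSpace X] [MetricSpace Y]
    [ProperSpace Y] (K : ℝ≥0) (a : X) (b : Y) :
    IsCompact {f : C(X, Y) | LipschitzWith K f ∧ f a = b} := by
  apply ArzelaAscoli.isCompact_of_equicontinuous
  · have himage : ContinuousMap.toFun '' {f : C(X, Y) | LipschitzWith K f ∧ f a = b} =
        {f : X → Y | LipschitzWith K f} ∩ {f | f a = b} := by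
      ext f
      exact ⟨by rintro ⟨g, hg, rfl⟩; exact hg, fun hf => ⟨⟨f, hf.1.continuous⟩, hf, rfl⟩⟩
    have hclosed : IsClosed ({f : X → Y | LipschitzWith K f} ∩ {f | f a = b}) :=
      (isClosed_setOfPred_lipschitzWith K).inter (isClosed_eq (continuous_apply a) continuous_const)
    rw [himage]
    refine (isCompact_univ_pi fun x => isCompact_closedBall b (K * dist x a)).of_isClosed_subset
      hclosed ?_
    rintro f ⟨hf, rfl⟩ x -
    exact hf.dist_le_mul x a
  · exact (LipschitzWith.uniformEquicontinuous _ K fun f => f.2.1).equicontinuous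

theorem exists_subseq_tendsto_of_lipschitzWith {X Y : Type*} [PseudoMetricSpace X] [ProperSpace X]
    [MetricSpace Y] [ProperSpace Y] {K : ℝ≥0} {a : X} {b : Y} {f : ℕ → X → Y}
    (hf : ∀ n, LipschitzWith K (f n)) (hfa : ∀ n, f n a = b) :
    ∃ g : X → Y, LipschitzWith K g ∧ ∃ φ : ℕ → ℕ, StrictMono φ ∧
      ∀ x, Tendsto (fun n => f (φ n) x) atTop (𝓝 (g x)) := by
  obtain ⟨g, hg, φ, hφ, hlim⟩ := (isCompact_setOf_lipschitzWith_apply_eq K a b).tendsto_subseq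
    (x := fun n => ⟨f n, (hf n).continuous⟩) fun n => ⟨hf n, hfa n⟩
  exact ⟨g, hg.1, φ, hφ, fun x => ((continuous_eval_const x).tendsto g).comp hlim⟩

end LipschitzCompactness

section Primitives

variable {E : Type*} [NormedAddCommGroup E]

theorem intervalIntegrable_of_norm_le {u : ℝ → E} {M : ℝ} (hu : StronglyMeasurable u)
    (hM : ∀ t, ‖u t‖ ≤ M) (a b : ℝ) : IntervalIntegrable u volume a b :=
  (intervalIntegrable_const (c := M)).mono_fun hu.aestronglyMeasurable
    (ae_of_all _ fun t => (hM t).trans (le_abs_self M))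

theorem stronglyMeasurable_floor_div (w : ℕ → E) (h : ℝ) :
    StronglyMeasurable fun τ : ℝ => w ⌊τ / h⌋₊ :=
  StronglyMeasurable.of_discrete.comp_measurable
    (Nat.measurable_floor.comp (measurable_id.div_const h))

variable [NormedSpace ℝ E]

theorem lipschitzWith_primitive {u : ℝ → E} {M : ℝ≥0} (hu : StronglyMeasurable u)
    (hM : ∀ t, ‖u t‖ ≤ M) (a : ℝ) : LipschitzWith M fun t => ∫ τ in a..t, u τ := by
  have hint := intervalIntegrable_of_norm_le hu hM
  refine LipschitzWith.of_dist_le_mul fun t t' => ?_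
  rw [dist_eq_norm, intervalIntegral.integral_interval_sub_left (hint a t) (hint a t'),
    Real.dist_eq]
  exact intervalIntegral.norm_integral_le_of_norm_le_const fun τ _ => hM τ

theorem hasDerivWithinAt_primitive_Icc [CompleteSpace E] {g : ℝ → E} {a b t : ℝ}
    (hg : ContinuousOn g (Icc a b)) (ht : t ∈ Icc a b) :
    HasDerivWithinAt (fun t => ∫ τ in a..t, g τ) (g t) (Icc a b) t := by
  have : Fact (t ∈ Icc a b) := ⟨ht⟩
  refine intervalIntegral.integral_hasDerivWithinAt_right ?_
    (hg.stronglyMeasurableAtFilter_nhdsWithin measurableSet_Icc t) (hg t ht)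
  exact (hg.mono (uIcc_of_le ht.1 ▸ Icc_subset_Icc_right ht.2)).intervalIntegrable

theorem hasDerivWithinAt_of_tendsto_primitive [CompleteSpace E] {u : ℕ → ℝ → E} {g x : ℝ → E}
    {x₀ : E} {M a b : ℝ} (hu : ∀ n, StronglyMeasurable (u n)) (hM : ∀ n t, ‖u n t‖ ≤ M)
    (hg : ContinuousOn g (Icc a b))
    (hlim : ∀ t ∈ Icc a b, Tendsto (fun n => u n t) atTop (𝓝 (g t)))
    (hx : ∀ t ∈ Icc a b, Tendsto (fun n => x₀ + ∫ τ in a..t, u n τ) atTop (𝓝 (x t))) :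
    ∀ t ∈ Icc a b, HasDerivWithinAt x (g t) (Icc a b) t := by
  have hprimitive : ∀ t ∈ Icc a b, x t = x₀ + ∫ τ in a..t, g τ := fun t ht => by
    refine tendsto_nhds_unique (hx t ht) (Tendsto.const_add x₀ ?_)
    refine intervalIntegral.tendsto_integral_filter_of_dominated_convergence (fun _ => M)
      (.of_forall fun n => (hu n).aestronglyMeasurable)
      (.of_forall fun n => ae_of_all _ fun τ _ => hM n τ) intervalIntegrable_const
      (ae_of_all _ fun τ hτ => hlim τ ?_)
    rw [uIoc_of_le ht.1] at hτ
    exact ⟨hτ.1.le, hτ.2.trans ht.2⟩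
  exact fun t ht => ((hasDerivWithinAt_primitive_Icc hg ht).const_add x₀).congr hprimitive
    (hprimitive t ht)

theorem intervalIntegral_floor_div_eq_smul [CompleteSpace E] (w : ℕ → E) {h : ℝ} (hh : 0 < h)
    (j : ℕ) :
    ∫ τ in (j * h)..((j + 1 : ℕ) * h), w ⌊τ / h⌋₊ = h • w j := by
  have hconst : ∀ τ ∈ Ioo (j * h) ((j + 1 : ℕ) * h), w ⌊τ / h⌋₊ = w j := fun τ hτ => by
    have hj : ⌊τ / h⌋₊ = j := by
      rw [Nat.floor_eq_iff (div_nonneg ((by positivity : 0 ≤ j * h).trans hτ.1.le) hh.le),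
        le_div_iff₀ hh, div_lt_iff₀ hh]
      exact ⟨hτ.1.le, mod_cast hτ.2⟩
    rw [hj]
  rw [intervalIntegral.integral_congr_Ioo_of_le (by gcongr; simp) hconst,
    intervalIntegral.integral_const]
  congr 1
  push_cast
  ring

end Primitives

section ApproximateTrajectories

variable {E : Type*} [NormedAddCommGroup E] [NormedSpace ℝ E]

/-- An `ε`-approximate trajectory of `ẋ = F x` on `[0, T]` in `K` starting at `x₀`, along which `V`
is nondecreasing up to `ε`. The field is sampled at `s t`, the curve `y t` shadows the primitive of
the sampled velocity, and `V` is compared between earlier points of `y` and later points of `s`. -/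
structure IsApproxTrajectory (F : E → E) (V : E → ℝ) (K : Set E) (x₀ : E) (T ε : ℝ)
    (y s : ℝ → E) : Prop where
  stronglyMeasurable : StronglyMeasurable fun t => F (s t)
  sample_mem : ∀ t, s t ∈ K
  mem : ∀ t ∈ Icc 0 T, y t ∈ K
  dist_primitive_le : ∀ t ∈ Icc 0 T, dist (y t) (x₀ + ∫ τ in 0..t, F (s τ)) ≤ ε
  dist_sample_le : ∀ t ∈ Icc 0 T, dist (s t) (y t) ≤ ε
  le_add : ∀ a ∈ Icc 0 T, ∀ b ∈ Icc 0 T, a ≤ b → V (y a) ≤ V (s b) + ε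

theorem exists_tendsto_of_isApproxTrajectory [ProperSpace E] {F : E → E} {V : E → ℝ} {K : Set E}
    {x₀ : E} {T : ℝ} (hK : IsCompact K) (hF : ContinuousOn F K)
    (happrox : ∀ ε > 0, ∃ y s, IsApproxTrajectory F V K x₀ T ε y s) :
    ∃ (x : ℝ → E) (ε : ℕ → ℝ) (y s : ℕ → ℝ → E), Continuous x ∧ Tendsto ε atTop (𝓝 0) ∧
      (∀ n, IsApproxTrajectory F V K x₀ T (ε n) (y n) (s n)) ∧
      ∀ t, Tendsto (fun n => x₀ + ∫ τ in 0..t, F (s n τ)) atTop (𝓝 (x t)) := by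
  obtain ⟨M, hM⟩ := hK.exists_bound_of_continuousOn hF
  obtain ⟨ε, -, hεpos, hε⟩ := exists_seq_strictAnti_tendsto (0 : ℝ)
  choose y s hys using fun n => happrox (ε n) (hεpos n)
  have hLip (n : ℕ) : LipschitzWith M.toNNReal fun t => x₀ + ∫ τ in 0..t, F (s n τ) := by
    simpa [Function.comp_def] using (IsometryEquiv.addLeft x₀).isometry.lipschitz.comp
      (lipschitzWith_primitive (hys n).stronglyMeasurable
        (fun t => (hM _ ((hys n).sample_mem t)).trans M.le_coe_toNNReal) 0)
  obtain ⟨x, hxLip, φ, hφ, hx⟩ :=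
    exists_subseq_tendsto_of_lipschitzWith hLip (a := 0) (b := x₀) (by simp)
  exact ⟨x, ε ∘ φ, y ∘ φ, s ∘ φ, hxLip.continuous, hε.comp hφ.tendsto_atTop, fun n => hys (φ n), hx⟩

theorem exists_trajectory_of_isApproxTrajectory [ProperSpace E] {F : E → E} {V : E → ℝ} {K : Set E}
    {x₀ : E} {T : ℝ} (hK : IsCompact K) (hF : ContinuousOn F K) (hV : ContinuousOn V K)
    (happrox : ∀ ε > 0, ∃ y s, IsApproxTrajectory F V K x₀ T ε y s) :
    ∃ x : ℝ → E, x 0 = x₀ ∧ (∀ t ∈ Icc 0 T, x t ∈ K) ∧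
      (∀ t ∈ Icc 0 T, HasDerivWithinAt x (F (x t)) (Icc 0 T) t) ∧
      MonotoneOn (fun t => V (x t)) (Icc 0 T) := by
  obtain ⟨M, hM⟩ := hK.exists_bound_of_continuousOn hF
  obtain ⟨x, ε, y, s, hxc, hε, hys, hx⟩ := exists_tendsto_of_isApproxTrajectory hK hF happrox
  have hy : ∀ t ∈ Icc 0 T, Tendsto (fun n => y n t) atTop (𝓝 (x t)) := fun t ht =>
    tendsto_of_tendsto_of_dist (hx t) <| squeeze_zero (fun _ => dist_nonneg)
      (fun n => dist_comm (y n t) _ ▸ (hys n).dist_primitive_le t ht) hε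
  have hs : ∀ t ∈ Icc 0 T, Tendsto (fun n => s n t) atTop (𝓝 (x t)) := fun t ht =>
    tendsto_of_tendsto_of_dist (hy t ht) <| squeeze_zero (fun _ => dist_nonneg)
      (fun n => dist_comm (s n t) _ ▸ (hys n).dist_sample_le t ht) hε
  have hxK : ∀ t ∈ Icc 0 T, x t ∈ K := fun t ht =>
    hK.isClosed.mem_of_tendsto (hs t ht) (.of_forall fun n => (hys n).sample_mem t)
  refine ⟨x, tendsto_nhds_unique (hx 0) (by simp), hxK, ?_, ?_⟩
  · refine hasDerivWithinAt_of_tendsto_primitive (fun n => (hys n).stronglyMeasurable)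
      (fun n t => hM _ ((hys n).sample_mem t)) (hF.comp hxc.continuousOn hxK) (fun t ht => ?_)
      fun t _ => hx t
    exact (hF (x t) (hxK t ht)).tendsto.comp
      (tendsto_nhdsWithin_iff.2 ⟨hs t ht, .of_forall fun n => (hys n).sample_mem t⟩)
  · intro a ha b hb hab
    have hVy : Tendsto (fun n => V (y n a)) atTop (𝓝 (V (x a))) :=
      (hV (x a) (hxK a ha)).tendsto.comp
        (tendsto_nhdsWithin_iff.2 ⟨hy a ha, .of_forall fun n => (hys n).mem a ha⟩)
    have hVs : Tendsto (fun n => V (s n b) + ε n) atTop (𝓝 (V (x b))) := by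
      simpa using ((hV (x b) (hxK b hb)).tendsto.comp
        (tendsto_nhdsWithin_iff.2 ⟨hs b hb, .of_forall fun n => (hys n).sample_mem b⟩)).add hε
    exact le_of_tendsto_of_tendsto' hVy hVs fun n => (hys n).le_add a ha b hb hab

end ApproximateTrajectories

section ProximalPoints

variable {E : Type*} [NormedAddCommGroup E] {V : E → ℝ} {K : Set E} {c : ℝ} {y s : E}

/-- `s` is a proximal point of `y`: it realizes the sup-convolution
`max_{z ∈ K} (V z - c ‖z - y‖²)` of `V` at `y`. -/
def IsProximalPoint (V : E → ℝ) (K : Set E) (c : ℝ) (y s : E) : Prop :=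
  s ∈ K ∧ IsMaxOn (fun z => V z - c * ‖z - y‖ ^ 2) K s

theorem exists_isProximalPoint (hK : IsCompact K) (hne : K.Nonempty) (hV : ContinuousOn V K)
    (c : ℝ) (y : E) : ∃ s, IsProximalPoint V K c y s :=
  hK.exists_isMaxOn hne (hV.sub (by fun_prop))

namespace IsProximalPoint

theorem le_sub (hs : IsProximalPoint V K c y s) (hy : y ∈ K) : V y ≤ V s - c * ‖s - y‖ ^ 2 := by
  simpa using hs.2 hy

theorem norm_sub_lt (hs : IsProximalPoint V K c y s) (hy : y ∈ K) {C ρ : ℝ}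
    (hC : ∀ z ∈ K, |V z| ≤ C) (hc : 0 < c) (hρ : 0 < ρ) (hcρ : 2 * C < c * ρ ^ 2) :
    ‖s - y‖ < ρ := by
  have hle : c * ‖s - y‖ ^ 2 ≤ 2 * C := by
    linarith [hs.le_sub hy, (abs_le.1 (hC y hy)).1, (abs_le.1 (hC s hs.1)).2]
  exact lt_of_pow_lt_pow_left₀ 2 hρ.le (lt_of_mul_lt_mul_left (hle.trans_lt hcρ) hc.le)

end IsProximalPoint

end ProximalPoints

section ProximalEuler

variable {E : Type*} [NormedAddCommGroup E] [InnerProductSpace ℝ E] {F : E → E} {V : E → ℝ}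
  {K : Set E} {x₀ : E} {c h M : ℝ}

/-- `V` is a subsolution of `-F·∇V = 0` on `Ω` in the proximal sense: the viscosity inequality is
only tested with the paraboloids `x ↦ c ‖x - y‖²`, whose gradient at `s` is `2 c (s - y)`. -/
def IsProximalSubsolutionOn (F : E → E) (V : E → ℝ) (Ω : Set E) : Prop :=
  ∀ s ∈ Ω, ∀ y, ∀ c > 0, IsLocalMax (fun x => V x - c * ‖x - y‖ ^ 2) s → 0 ≤ ⟪F s, s - y⟫

theorem IsProximalPoint.inner_nonneg {Ω : Set E} {y s : E} (hs : IsProximalPoint V K c y s)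
    (hprox : IsProximalSubsolutionOn F V Ω) (hc : 0 < c) (hsΩ : s ∈ Ω) (hsK : K ∈ 𝓝 s) :
    0 ≤ ⟪F s, s - y⟫ :=
  hprox s hsΩ y c hc (hs.2.isLocalMax hsK)

theorem IsProximalPoint.le_sub_add_of_step {y s s' : E} (hs : s ∈ K)
    (hs' : IsProximalPoint V K c (y + h • F s) s') (hc : 0 ≤ c) (hh : 0 ≤ h) (hM : ‖F s‖ ≤ M)
    (hinner : 0 ≤ ⟪F s, s - y⟫) :
    V s - c * ‖s - y‖ ^ 2 ≤
      V s' - c * ‖s' - (y + h • F s)‖ ^ 2 + c * (h * M) ^ 2 := by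
  have hstep : ‖s - (y + h • F s)‖ ^ 2 ≤ ‖s - y‖ ^ 2 + (h * M) ^ 2 := by
    have hFs : ‖h • F s‖ ≤ h * M := by
      rw [norm_smul, Real.norm_of_nonneg hh]
      gcongr
    calc ‖s - (y + h • F s)‖ ^ 2
        = ‖s - y‖ ^ 2 - 2 * (h * ⟪F s, s - y⟫) + ‖h • F s‖ ^ 2 := by
          rw [← sub_sub, norm_sub_sq_real, inner_smul_right, real_inner_comm]
      _ ≤ ‖s - y‖ ^ 2 - 0 + (h * M) ^ 2 := by gcongr; positivity
      _ = ‖s - y‖ ^ 2 + (h * M) ^ 2 := by ring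
  calc V s - c * ‖s - y‖ ^ 2
      ≤ V s - c * ‖s - (y + h • F s)‖ ^ 2 + c * (h * M) ^ 2 := by
        linarith [mul_le_mul_of_nonneg_left hstep hc]
    _ ≤ _ := add_le_add_left (hs'.2 hs) _

/-- Euler scheme of step `h` for `ẋ = F x` in which the field is evaluated at a proximal point `s j`
of the node `y j` instead of the node itself (proximal aiming). -/
structure IsProximalEulerScheme (F : E → E) (V : E → ℝ) (K : Set E) (c h : ℝ) (x₀ : E)
    (y s : ℕ → E) : Prop where
  zero : y 0 = x₀
  succ : ∀ j, y (j + 1) = y j + h • F (s j)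
  isProximalPoint : ∀ j, IsProximalPoint V K c (y j) (s j)

theorem exists_isProximalEulerScheme (F : E → E) (hK : IsCompact K) (hne : K.Nonempty)
    (hV : ContinuousOn V K) (c h : ℝ) (x₀ : E) :
    ∃ y s, IsProximalEulerScheme F V K c h x₀ y s := by
  choose σ hσ using exists_isProximalPoint hK hne hV c
  let y (j : ℕ) : E := (fun z => z + h • F (σ z))^[j] x₀
  exact ⟨y, fun j => σ (y j), rfl, fun j => Function.iterate_succ_apply' _ j x₀, fun j => hσ (y j)⟩

namespace IsProximalEulerScheme

variable {y s : ℕ → E}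

theorem norm_le (hys : IsProximalEulerScheme F V K c h x₀ y s) (hM : ∀ z ∈ K, ‖F z‖ ≤ M) (j : ℕ) :
    ‖F (s j)‖ ≤ M :=
  hM _ (hys.isProximalPoint j).1

theorem eq_add_integral [CompleteSpace E] (hys : IsProximalEulerScheme F V K c h x₀ y s)
    (hM : ∀ z ∈ K, ‖F z‖ ≤ M) (hh : 0 < h) (j : ℕ) :
    y j = x₀ + ∫ τ in 0..(j * h), F (s ⌊τ / h⌋₊) := by
  have hint := intervalIntegrable_of_norm_le (stronglyMeasurable_floor_div (fun j => F (s j)) h)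
    fun τ => hys.norm_le hM ⌊τ / h⌋₊
  induction j with
  | zero => simpa using hys.zero
  | succ j ih =>
    rw [hys.succ, ih, add_assoc, ← intervalIntegral_floor_div_eq_smul (fun j => F (s j)) hh,
      intervalIntegral.integral_add_adjacent_intervals (hint _ _) (hint _ _)]

theorem dist_primitive_le [CompleteSpace E] (hys : IsProximalEulerScheme F V K c h x₀ y s)
    (hM : ∀ z ∈ K, ‖F z‖ ≤ M) (hh : 0 < h) (j : ℕ) (t : ℝ) :
    dist (y j) (x₀ + ∫ τ in 0..t, F (s ⌊τ / h⌋₊)) ≤ M * |j * h - t| := by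
  lift M to ℝ≥0 using (norm_nonneg _).trans (hys.norm_le hM 0)
  rw [hys.eq_add_integral hM hh j, dist_add_left, ← Real.dist_eq]
  exact (lipschitzWith_primitive (stronglyMeasurable_floor_div (fun j => F (s j)) h)
    (fun τ => hys.norm_le hM ⌊τ / h⌋₊) 0).dist_le_mul _ _

theorem mem_closedBall [CompleteSpace E] (hys : IsProximalEulerScheme F V K c h x₀ y s)
    (hM : ∀ z ∈ K, ‖F z‖ ≤ M) (hh : 0 < h) {T r : ℝ} (hT : T * M ≤ r) {j : ℕ} (hj : j * h ≤ T) :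
    y j ∈ closedBall x₀ r := by
  have hM0 : 0 ≤ M := (norm_nonneg _).trans (hys.norm_le hM 0)
  calc dist (y j) x₀ ≤ M * (j * h) := by
        simpa [abs_of_nonneg (by positivity : 0 ≤ j * h)] using hys.dist_primitive_le hM hh j 0
    _ ≤ M * T := by gcongr
    _ ≤ r := by linarith

theorem le_add (hys : IsProximalEulerScheme F V K c h x₀ y s) (hM : ∀ z ∈ K, ‖F z‖ ≤ M)
    (hc : 0 ≤ c) (hh : 0 ≤ h) {i j : ℕ} (hij : i ≤ j) (hi : y i ∈ K)
    (hinner : ∀ l < j, 0 ≤ ⟪F (s l), s l - y l⟫) :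
    V (y i) ≤ V (s j) + j * (c * (h * M) ^ 2) := by
  -- It is the sup-convolution, not `V` itself, that propagates from one node to the next.
  suffices V (y i) ≤ V (s j) - c * ‖s j - y j‖ ^ 2 + j * (c * (h * M) ^ 2) by
    linarith [(by positivity : 0 ≤ c * ‖s j - y j‖ ^ 2)]
  induction j, hij using Nat.le_induction with
  | base =>
    linarith [(hys.isProximalPoint i).le_sub hi, (by positivity : 0 ≤ i * (c * (h * M) ^ 2))]
  | succ j _ ih =>
    have hstep := (hys.succ j ▸ hys.isProximalPoint (j + 1)).le_sub_add_of_step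
      (hys.isProximalPoint j).1 hc hh (hys.norm_le hM j) (hinner j j.lt_succ_self)
    rw [hys.succ]
    push_cast
    linarith [ih fun l hl => hinner l (hl.trans j.lt_succ_self)]

theorem norm_sub_lt_and_inner_nonneg [CompleteSpace E] {R T C ρ : ℝ}
    (hys : IsProximalEulerScheme F V (closedBall x₀ R) c h x₀ y s)
    (hprox : IsProximalSubsolutionOn F V (ball x₀ R)) (hM : ∀ z ∈ closedBall x₀ R, ‖F z‖ ≤ M)
    (hC : ∀ z ∈ closedBall x₀ R, |V z| ≤ C) (hc : 0 < c) (hh : 0 < h) (hT : T * M + ρ ≤ R)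
    (hρ : 0 < ρ) (hcρ : 2 * C < c * ρ ^ 2) {j : ℕ} (hj : j * h ≤ T) :
    ‖s j - y j‖ < ρ ∧ 0 ≤ ⟪F (s j), s j - y j⟫ := by
  have hyR : y j ∈ closedBall x₀ (R - ρ) := hys.mem_closedBall hM hh (by linarith) hj
  have hlt : ‖s j - y j‖ < ρ := (hys.isProximalPoint j).norm_sub_lt
    (closedBall_subset_closedBall (by linarith) hyR) hC hc hρ hcρ
  have hsR : s j ∈ ball x₀ R := calc
    dist (s j) x₀ ≤ dist (s j) (y j) + dist (y j) x₀ := dist_triangle _ _ _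
    _ < ρ + (R - ρ) := add_lt_add_of_lt_of_le (dist_eq_norm (s j) (y j) ▸ hlt) hyR
    _ = R := by ring
  exact ⟨hlt, (hys.isProximalPoint j).inner_nonneg hprox hc hsR
    (mem_of_superset (isOpen_ball.mem_nhds hsR) ball_subset_closedBall)⟩

theorem isApproxTrajectory [CompleteSpace E] {R T C ε ρ : ℝ}
    (hys : IsProximalEulerScheme F V (closedBall x₀ R) c h x₀ y s)
    (hprox : IsProximalSubsolutionOn F V (ball x₀ R)) (hM : ∀ z ∈ closedBall x₀ R, ‖F z‖ ≤ M)
    (hC : ∀ z ∈ closedBall x₀ R, |V z| ≤ C) (hc : 0 < c) (hh : 0 < h) (hT : T * M + ρ ≤ R)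
    (hρ : 0 < ρ) (hρε : ρ ≤ ε) (hcρ : 2 * C < c * ρ ^ 2) (hhM : M * h ≤ ε)
    (hTh : T * c * M ^ 2 * h ≤ ε) :
    IsApproxTrajectory F V (closedBall x₀ R) x₀ T ε (fun t => y ⌊t / h⌋₊) fun t => s ⌊t / h⌋₊ := by
  have hM0 : 0 ≤ M := (norm_nonneg _).trans (hys.norm_le hM 0)
  have hfloor_le {t : ℝ} (ht : 0 ≤ t) : ⌊t / h⌋₊ * h ≤ t :=
    (le_div_iff₀ hh).1 (Nat.floor_le (by positivity))
  have hlt_floor (t : ℝ) : t < ⌊t / h⌋₊ * h + h := by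
    simpa [add_mul] using (div_lt_iff₀ hh).1 (Nat.lt_floor_add_one (t / h))
  have hclose {j : ℕ} (hj : j * h ≤ T) : ‖s j - y j‖ < ρ ∧ 0 ≤ ⟪F (s j), s j - y j⟫ :=
    hys.norm_sub_lt_and_inner_nonneg hprox hM hC hc hh hT hρ hcρ hj
  have hmem {j : ℕ} (hj : j * h ≤ T) : y j ∈ closedBall x₀ R :=
    hys.mem_closedBall hM hh (by linarith) hj
  refine ⟨stronglyMeasurable_floor_div (fun j => F (s j)) h,
    fun t => (hys.isProximalPoint _).1, fun t ht => hmem ((hfloor_le ht.1).trans ht.2),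
    fun t ht => ?_, fun t ht => ?_, fun a ha b hb hab => ?_⟩
  · refine (hys.dist_primitive_le hM hh _ t).trans (le_trans ?_ hhM)
    gcongr
    exact abs_le.2 ⟨by linarith [hlt_floor t], by linarith [hfloor_le ht.1]⟩
  · rw [dist_eq_norm]
    exact (hclose ((hfloor_le ht.1).trans ht.2)).1.le.trans hρε
  · have hbT : ⌊b / h⌋₊ * h ≤ T := (hfloor_le hb.1).trans hb.2
    have herror : ⌊b / h⌋₊ * (c * (h * M) ^ 2) ≤ ε := calc
      _ = ⌊b / h⌋₊ * h * c * M ^ 2 * h := by ring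
      _ ≤ T * c * M ^ 2 * h := by gcongr
      _ ≤ ε := hTh
    have hVle := hys.le_add hM hc.le hh.le (Nat.floor_mono (div_le_div_of_nonneg_right hab hh.le))
      (hmem ((hfloor_le ha.1).trans ha.2)) fun l hl => (hclose (le_trans (by gcongr) hbT)).2
    linarith

end IsProximalEulerScheme

theorem exists_isApproxTrajectory [ProperSpace E] {R T ε : ℝ}
    (hV : ContinuousOn V (closedBall x₀ R)) (hprox : IsProximalSubsolutionOn F V (ball x₀ R))
    (hM : ∀ z ∈ closedBall x₀ R, ‖F z‖ ≤ M) (hR : 0 < R) (hT : T * M < R) (hε : 0 < ε) :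
    ∃ y s, IsApproxTrajectory F V (closedBall x₀ R) x₀ T ε y s := by
  have hK : IsCompact (closedBall x₀ R) := isCompact_closedBall x₀ R
  obtain ⟨C, hC⟩ := hK.exists_bound_of_continuousOn hV
  obtain ⟨ρ, hρ, hρε, hρR⟩ : ∃ ρ > 0, ρ ≤ ε ∧ ρ ≤ R - T * M :=
    ⟨min ε (R - T * M), lt_min hε (sub_pos.2 hT), min_le_left _ _, min_le_right _ _⟩
  obtain ⟨c, hcρ, hc⟩ : ∃ c : ℝ, 2 * C < c * ρ ^ 2 ∧ 0 < c :=
    (((tendsto_id.atTop_mul_const (by positivity)).eventually_gt_atTop _).and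
      (eventually_gt_atTop 0)).exists
  have hsmall (A : ℝ) : ∀ᶠ h in 𝓝[>] (0 : ℝ), A * h ≤ ε := by
    have : Tendsto (fun h : ℝ => A * h) (𝓝[>] 0) (𝓝 0) := by
      simpa using (tendsto_nhdsWithin_of_tendsto_nhds (tendsto_id (x := 𝓝 (0 : ℝ)))).const_mul A
    exact this.eventually_le_const hε
  obtain ⟨h, ⟨hhM, hTh⟩, hh⟩ :=
    (((hsmall M).and (hsmall (T * c * M ^ 2))).and self_mem_nhdsWithin).exists
  obtain ⟨y, s, hys⟩ :=
    exists_isProximalEulerScheme F hK ⟨x₀, mem_closedBall_self hR.le⟩ hV c h x₀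
  exact ⟨_, _, hys.isApproxTrajectory hprox hM hC hc hh (by linarith) hρ hρε hcρ hhM hTh⟩

theorem IsProximalSubsolutionOn.mono {Ω Ω' : Set E} (hprox : IsProximalSubsolutionOn F V Ω)
    (h : Ω' ⊆ Ω) : IsProximalSubsolutionOn F V Ω' :=
  fun s hs => hprox s (h hs)

theorem IsProximalSubsolutionOn.exists_trajectory [ProperSpace E] {Ω : Set E} (hΩ : IsOpen Ω)
    (hF : ContinuousOn F Ω) (hV : ContinuousOn V Ω) (hprox : IsProximalSubsolutionOn F V Ω)
    (hx₀ : x₀ ∈ Ω) :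
    ∃ T > 0, ∃ x : ℝ → E, x 0 = x₀ ∧ (∀ t ∈ Icc 0 T, x t ∈ Ω) ∧
      (∀ t ∈ Icc 0 T, HasDerivWithinAt x (F (x t)) (Icc 0 T) t) ∧
      MonotoneOn (fun t => V (x t)) (Icc 0 T) := by
  obtain ⟨R, hR, hRΩ⟩ := nhds_basis_closedBall.mem_iff.1 (hΩ.mem_nhds hx₀)
  have hK : IsCompact (closedBall x₀ R) := isCompact_closedBall x₀ R
  obtain ⟨M, hM⟩ := hK.exists_bound_of_continuousOn (hF.mono hRΩ)
  obtain ⟨T, hT, hTM⟩ := exists_pos_mul_lt hR M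
  obtain ⟨x, hx0, hxK, hderiv, hmono⟩ := exists_trajectory_of_isApproxTrajectory hK
    (hF.mono hRΩ) (hV.mono hRΩ) fun ε hε => exists_isApproxTrajectory (hV.mono hRΩ)
      (hprox.mono (ball_subset_closedBall.trans hRΩ)) hM hR (mul_comm M T ▸ hTM) hε
  exact ⟨T, hT, x, hx0, fun t ht => hRΩ (hxK t ht), hderiv, hmono⟩

end ProximalEuler

section ViscositySubsolutions

variable {E : Type*} [NormedAddCommGroup E] [InnerProductSpace ℝ E] [CompleteSpace E]

theorem continuousOn_gradient_of_contDiffOn {U : E → ℝ} {Ω : Set E} (hU : ContDiffOn ℝ 1 U Ω)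
    (hΩ : IsOpen Ω) : ContinuousOn (gradient U) Ω :=
  (InnerProductSpace.toDual ℝ E).symm.continuous.comp_continuousOn
    (hU.continuousOn_fderiv_of_isOpen hΩ le_rfl)

theorem hasGradientAt_const_mul_norm_sub_sq (c : ℝ) (y s : E) :
    HasGradientAt (fun x => c * ‖x - y‖ ^ 2) ((2 * c) • (s - y)) s := by
  rw [hasGradientAt_iff_hasFDerivAt]
  refine (((hasFDerivAt_id s).sub_const y).norm_sq.const_mul c).congr_fderiv ?_
  ext z
  simp only [id_eq, map_sub, ContinuousLinearMap.comp_id, smul_apply, sub_apply,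
    coe_innerSL_apply, nsmul_eq_mul, Nat.cast_ofNat, smul_eq_mul, map_smul,
    InnerProductSpace.toDual_apply_apply]
  ring

theorem isProximalSubsolutionOn_of_viscosity {F : E → E} {V : E → ℝ} {Ω : Set E}
    (hsub : ∀ φ : E → ℝ, ContDiff ℝ 1 φ → ∀ s ∈ Ω, IsLocalMax (fun x => V x - φ x) s →
      -⟪F s, gradient φ s⟫ ≤ 0) :
    IsProximalSubsolutionOn F V Ω := by
  intro s hs y c hc hmax
  have hφ : ContDiff ℝ 1 fun x : E => c * ‖x - y‖ ^ 2 :=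
    contDiff_const.mul ((contDiff_id.sub contDiff_const).norm_sq ℝ)
  have hinner := hsub _ hφ s hs hmax
  rw [(hasGradientAt_const_mul_norm_sub_sq c y s).gradient, inner_smul_right,
    neg_nonpos] at hinner
  exact nonneg_of_mul_nonneg_right hinner (by positivity)

end ViscositySubsolutions

theorem stmt_3_general {E : Type*} [NormedAddCommGroup E] [InnerProductSpace ℝ E] [ProperSpace E]
    (Ω : Set E) (hΩ : IsOpen Ω) (H : E → E → ℝ) (Hp : E → E → E)
    (hHc : ContinuousOn (fun q : E × E => H q.1 q.2) (Ω ×ˢ univ))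
    (_hHp : ∀ x ∈ Ω, ∀ p, 0 < H x p → HasGradientAt (H x) (Hp x p) p)
    (hHpc : ContinuousOn (fun q : E × E => Hp q.1 q.2) {q | q.1 ∈ Ω ∧ 0 < H q.1 q.2})
    (U : E → ℝ) (hU : ContDiffOn ℝ 1 U Ω)
    (hsub : ∀ φ : E → ℝ, ContDiff ℝ 1 φ → ∀ x₀ ∈ Ω, 0 < H x₀ (gradient U x₀) →
      IsLocalMaxOn (fun x => H x (gradient U x) - φ x) Ω x₀ →
      -⟪-(Hp x₀ (gradient U x₀)), gradient φ x₀⟫ ≤ 0) :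
    ∀ x₀ ∈ Ω, 0 < H x₀ (gradient U x₀) →
      ∃ ε > (0 : ℝ), ∃ x : ℝ → E, x 0 = x₀ ∧ (∀ t ∈ Ico (0 : ℝ) ε, x t ∈ Ω) ∧
        (∀ t ∈ Ico (0 : ℝ) ε,
          HasDerivWithinAt x (-(Hp (x t) (gradient U (x t)))) (Ico (0 : ℝ) ε) t) ∧
        MonotoneOn (fun t => H (x t) (gradient U (x t))) (Ico (0 : ℝ) ε) := by
  intro x₀ hx₀ hpos
  let V (x : E) : ℝ := H x (gradient U x)
  let F (x : E) : E := -Hp x (gradient U x)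
  have hgraph : ContinuousOn (fun x => (x, gradient U x)) Ω :=
    continuousOn_id.prodMk (continuousOn_gradient_of_contDiffOn hU hΩ)
  have hV : ContinuousOn V Ω := hHc.comp hgraph fun x hx => ⟨hx, mem_univ _⟩
  have hΩpos : IsOpen (Ω ∩ V ⁻¹' Ioi 0) := hV.isOpen_inter_preimage hΩ isOpen_Ioi
  have hF : ContinuousOn F (Ω ∩ V ⁻¹' Ioi 0) :=
    (hHpc.comp (hgraph.mono inter_subset_left) fun x hx => hx).neg
  have hprox : IsProximalSubsolutionOn F V (Ω ∩ V ⁻¹' Ioi 0) :=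
    isProximalSubsolutionOn_of_viscosity fun φ hφ s hs hmax => hsub φ hφ s hs.1 hs.2 (hmax.on Ω)
  obtain ⟨T, hT, x, hx0, hxΩ, hderiv, hmono⟩ :=
    hprox.exists_trajectory hΩpos hF (hV.mono inter_subset_left) ⟨hx₀, hpos⟩
  have hIco : Ico 0 T ⊆ Icc 0 T := Ico_subset_Icc_self
  exact ⟨T, hT, x, hx0, fun t ht => (hxΩ t (hIco ht)).1,
    fun t ht => (hderiv t (hIco ht)).mono hIco, hmono.mono hIco⟩

/-- along a suitable trajectory of the closed-loop Hamiltonian dynamics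
`ẋ = -H_p(x, ∇U(x))` starting at a non-singular point, the Hamiltonian
`t ↦ H(x_t, ∇U(x_t))` is nondecreasing, whenever `U` is a `C¹`-supersolution of the
Aronsson equation. -/
theorem stmt_3 {n : ℕ} (Ω : Set (EuclideanSpace ℝ (Fin n))) (hΩ : IsOpen Ω)
    (H : EuclideanSpace ℝ (Fin n) → EuclideanSpace ℝ (Fin n) → ℝ)
    (Hp : EuclideanSpace ℝ (Fin n) → EuclideanSpace ℝ (Fin n) → EuclideanSpace ℝ (Fin n))
    (hHc : ContinuousOn (fun q : EuclideanSpace ℝ (Fin n) × EuclideanSpace ℝ (Fin n) =>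
      H q.1 q.2) (Ω ×ˢ univ))
    (hHsymm : ∀ x ∈ Ω, ∀ p, H x (-p) = H x p)
    (hHp : ∀ x ∈ Ω, ∀ p, 0 < H x p → HasGradientAt (H x) (Hp x p) p)
    (hHpc : ContinuousOn (fun q : EuclideanSpace ℝ (Fin n) × EuclideanSpace ℝ (Fin n) =>
      Hp q.1 q.2) {q | q.1 ∈ Ω ∧ 0 < H q.1 q.2})
    (U : EuclideanSpace ℝ (Fin n) → ℝ) (hU : ContDiffOn ℝ 1 U Ω)
    -- `U` is a `C¹`-supersolution of the Aronsson equation: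
    -- `V(x) = H(x,∇U(x))` is a viscosity subsolution of `-F·∇V = 0` ...
    (hsub : ∀ φ : EuclideanSpace ℝ (Fin n) → ℝ, ContDiff ℝ 1 φ → ∀ x₀ ∈ Ω,
      0 < H x₀ (gradient U x₀) →
      IsLocalMaxOn (fun x => H x (gradient U x) - φ x) Ω x₀ →
      -⟪-(Hp x₀ (gradient U x₀)), gradient φ x₀⟫ ≤ 0)
    -- ... and a viscosity supersolution of `F·∇V = 0`, with `F = -H_p(·,∇U(·))`
    (hsup : ∀ φ : EuclideanSpace ℝ (Fin n) → ℝ, ContDiff ℝ 1 φ → ∀ x₀ ∈ Ω,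
      0 < H x₀ (gradient U x₀) →
      IsLocalMinOn (fun x => H x (gradient U x) - φ x) Ω x₀ →
      0 ≤ ⟪-(Hp x₀ (gradient U x₀)), gradient φ x₀⟫) :
    ∀ x₀ ∈ Ω, 0 < H x₀ (gradient U x₀) →
      ∃ ε > (0:ℝ), ∃ x : ℝ → EuclideanSpace ℝ (Fin n),
        x 0 = x₀ ∧ (∀ t ∈ Ico (0:ℝ) ε, x t ∈ Ω) ∧
        (∀ t ∈ Ico (0:ℝ) ε,
          HasDerivWithinAt x (-(Hp (x t) (gradient U (x t)))) (Ico (0:ℝ) ε) t) ∧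
        MonotoneOn (fun t => H (x t) (gradient U (x t))) (Ico (0:ℝ) ε) :=
  stmt_3_general Ω hΩ H Hp hHc hHp hHpc U hU hsub
end
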